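/- arXiv:1606.07915 — 8 statements merged into one kernel-verified Lean document; each statement's English description precedes it below -/
import Mathlib

section
/- For every set S of positive integers and every integer n > 1, the number of S-restricted compositions of n satisfies, as an identity of integers, R(S,n) = R(S,n−1) − Σ_{s : 2 ≤ s ≤ n, s−1 ∈ S, s ∉ S} R(S, n−s) + Σ_{s ∈ S, s ≤ n, s−1 ∉ S} R(S, n−s). -/
/-!
Splitting a nonempty restricted composition into its first part and the rest gives, for `m ≥ 1`,
`R(S, m) = ∑_{1 ≤ s ≤ m, s ∈ S} R(S, m - s)` (`compCount_eq_sum`). Taking `m = n - 1` and shifting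
the index by one gives `R(S, n - 1) = ∑_{2 ≤ s ≤ n, s - 1 ∈ S} R(S, n - s)`. Subtracting this from
the case `m = n`, the terms with both `s ∈ S` and `s - 1 ∈ S` cancel; what is left is the claim.
-/

/-- The number of `S`-restricted compositions of `n`: ordered tuples (lists) of
elements of `S` summing to `n`. -/
noncomputable def compCount (S : Set ℕ) (n : ℕ) : ℕ :=
  Nat.card {l : List ℕ // (∀ x ∈ l, x ∈ S) ∧ l.sum = n}

/-- `S`-restricted compositions of `n`, as lists. -/
abbrev RestrictedComp (S : Set ℕ) (n : ℕ) : Type :=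
  {l : List ℕ // (∀ x ∈ l, x ∈ S) ∧ l.sum = n}

theorem finite_restrictedComp {S : Set ℕ} (hS : ∀ s ∈ S, 0 < s) (n : ℕ) :
    Finite (RestrictedComp S n) := by
  let f : RestrictedComp S n → Composition n :=
    fun l => ⟨l.1, fun {i} hi => hS i (l.2.1 i hi), l.2.2⟩
  refine Finite.of_injective f fun a b h => Subtype.ext ?_
  exact congrArg Composition.blocks h

/-- A composition of `m ≥ 1` is its first part `s` followed by a composition of `m - s`. -/
def restrictedCompEquiv (S : Set ℕ) [DecidablePred (· ∈ S)] (hS : ∀ s ∈ S, 0 < s)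
    (m : ℕ) (hm : 0 < m) :
    RestrictedComp S m ≃
      Σ s : {s // s ∈ (Finset.Icc 1 m).filter (· ∈ S)}, RestrictedComp S (m - s.1) where
  toFun
    | ⟨[], h⟩ => absurd h.2 (by simp; omega)
    | ⟨a :: l, h⟩ =>
      ⟨⟨a, by
          have h1 := h.1 a (by simp)
          have h2 := h.2
          have h3 := hS a h1
          simp only [List.sum_cons] at h2
          simp only [Finset.mem_filter, Finset.mem_Icc]
          exact ⟨by omega, h1⟩⟩,
        ⟨l, fun x hx => h.1 x (by simp [hx]), by
          have h2 := h.2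
          simp only [List.sum_cons] at h2
          show l.sum = m - a
          omega⟩⟩
  invFun p := ⟨p.1.1 :: p.2.1, by
    obtain ⟨⟨a, ha⟩, l, hl, hs⟩ := p
    simp only [Finset.mem_filter, Finset.mem_Icc] at ha hs
    refine ⟨?_, by simp only [List.sum_cons]; omega⟩
    intro x hx
    rcases List.mem_cons.1 hx with rfl | hx
    · exact ha.2
    · exact hl x hx⟩
  left_inv := by
    rintro ⟨_ | ⟨a, l⟩, h⟩
    · exact absurd h.2 (by simp; omega)
    · rfl
  right_inv _ := rfl

theorem compCount_eq_sum (S : Set ℕ) [DecidablePred (· ∈ S)] (hS : ∀ s ∈ S, 0 < s)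
    (m : ℕ) (hm : 0 < m) :
    compCount S m = ∑ s ∈ Finset.Icc 1 m, if s ∈ S then compCount S (m - s) else 0 := by
  have hfin := finite_restrictedComp hS
  rw [← Finset.sum_filter, ← Finset.sum_coe_sort]
  exact (Nat.card_congr (restrictedCompEquiv S hS m hm)).trans Nat.card_sigma

theorem stmt1 (S : Set ℕ) [DecidablePred (· ∈ S)] (hS : ∀ s ∈ S, 0 < s)
    (n : ℕ) (hn : 1 < n) :
    (compCount S n : ℤ) = (compCount S (n - 1) : ℤ)
      - ∑ s ∈ Finset.Icc 2 n, (if s - 1 ∈ S ∧ s ∉ S then (compCount S (n - s) : ℤ) else 0)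
      + ∑ s ∈ Finset.Icc 1 n, (if s ∈ S ∧ s - 1 ∉ S then (compCount S (n - s) : ℤ) else 0) := by
  have h0 : 0 ∉ S := fun h => lt_irrefl 0 (hS 0 h)
  have hA : (compCount S n : ℤ)
      = ∑ s ∈ Finset.Icc 1 n, if s ∈ S then (compCount S (n - s) : ℤ) else 0 := by
    rw [compCount_eq_sum S hS n (by omega)]
    push_cast
    rfl
  have hB : (compCount S (n - 1) : ℤ)
      = ∑ s ∈ Finset.Icc 2 n, if s - 1 ∈ S then (compCount S (n - s) : ℤ) else 0 := by
    rw [compCount_eq_sum S hS (n - 1) (by omega)]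
    push_cast
    refine Finset.sum_bij' (fun s _ => s + 1) (fun s _ => s - 1) ?_ ?_ ?_ ?_ ?_
    · intro s hs; simp only [Finset.mem_Icc] at hs ⊢; omega
    · intro s hs; simp only [Finset.mem_Icc] at hs ⊢; omega
    · intro s hs; simp
    · intro s hs; simp only [Finset.mem_Icc] at hs; omega
    · intro s hs
      rw [Nat.add_sub_cancel, show n - 1 - s = n - (s + 1) by omega]
  -- The sums over `2 ≤ s ≤ n` may start at `s = 1`, since `1 - 1 = 0 ∉ S`.
  have hext : ∀ f : ℕ → ℤ, f 1 = 0 → ∑ s ∈ Finset.Icc 2 n, f s = ∑ s ∈ Finset.Icc 1 n, f s := by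
    intro f hf
    refine Finset.sum_subset (Finset.Icc_subset_Icc_left (by omega)) fun s hs hs' => ?_
    simp only [Finset.mem_Icc] at hs hs'
    rw [show s = 1 by omega, hf]
  rw [hA, hB, hext _ (by simp [h0]), hext _ (by simp [h0]), ← Finset.sum_sub_distrib,
    ← Finset.sum_add_distrib]
  refine Finset.sum_congr rfl fun s _ => ?_
  by_cases h1 : s ∈ S <;> by_cases h2 : s - 1 ∈ S <;> simp [h1, h2]
end

section
/- Let A = {a_1 < a_2 < ... < a_l} be a finite set of positive integers, let κ : A → ℝ, and let f : ℕ → ℝ satisfy the linear homogeneous recurrence f(n) = Σ_{a ∈ A} κ(a) f(n−a) for all n ≥ a_l. Then for every n ≥ a_l, f(n) = Σ_{i=0}^{a_l − 1} V(n,i) f(i), where V(n,i) is the sum, over all A-restricted compositions z = (z_1,...,z_k) of n−i whose first part z_1 satisfies z_1 ≥ a_l − i, of the product κ(z_1)κ(z_2)⋯κ(z_k). -/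
/-!
Write `m = max A`. A composition `z` of `n - i` is a walk from `i` up to `n` with steps in `A`, and
the condition on the first part says that its first step already lands at or above `m`. Iterating
the recurrence from `n ≥ m` and stopping as soon as an index drops below `m` traces such walks
backwards, so `f n` is the sum of `f i` over all of them, weighted by the product of the
coefficients. Formally, admitting the empty walk from `i` to `i`, the total weight `W i n` equals
`1` if `n = i` and `0` otherwise when `n < m`, and removing the last step of a walk gives
`W i n = ∑ a ∈ A, κ a * W i (n - a)` when `n ≥ m` (`finsum_walks_of_ge`). Strong induction on `n`
then yields `f n = ∑ i < m, W i n * f i` for every `n`.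
-/

/-- The walks from `i` to `n` with steps in `A` that are empty or whose first step lands at or
above `m`. A walk is encoded by its list of steps. -/
def walks (A : Finset ℕ) (m i n : ℕ) : Set (List ℕ) :=
  {z | (∀ x ∈ z, x ∈ A) ∧ i + z.sum = n ∧ (z = [] ∨ m ≤ i + z.headI)}

/-- Below the threshold `m` only the empty walk is possible. -/
lemma walks_of_lt (A : Finset ℕ) {m i n : ℕ} (hn : n < m) :
    walks A m i n = if n = i then {[]} else ∅ := by
  ext z
  cases z with
  | nil => by_cases h : n = i <;> simp [walks, h, eq_comm]
  | cons b t =>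
    have h : (b :: t) ∉ walks A m i n := by
      rintro ⟨-, h2, h3⟩
      simp at h2 h3
      omega
    simp only [h, false_iff]
    split_ifs <;> simp

/-- Decomposition of walks by their last step. -/
lemma walks_of_ge {A : Finset ℕ} {m i n : ℕ} (hm : ∀ a ∈ A, a ≤ m) (hi : i < m) (hn : m ≤ n) :
    walks A m i n = ⋃ a ∈ (A : Set ℕ), (fun w => w ++ [a]) '' walks A m i (n - a) := by
  ext z
  simp only [Set.mem_iUnion, Set.mem_image, exists_prop]
  constructor
  · rintro ⟨h1, h2, h3⟩
    rcases List.eq_nil_or_concat z with rfl | ⟨w, a, rfl⟩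
    · simp at h2
      omega
    · simp only [List.concat_eq_append] at *
      refine ⟨a, by simpa using h1 a (by simp), w, ⟨fun x hx => h1 x (by simp [hx]), ?_, ?_⟩, rfl⟩
      · simp at h2
        omega
      · cases w with
        | nil => simp
        | cons b t => simpa using h3
  · rintro ⟨a, ha, w, ⟨h1, h2, h3⟩, rfl⟩
    have ha' : a ∈ A := by simpa using ha
    have := hm a ha'
    refine ⟨?_, ?_, Or.inr ?_⟩
    · intro x hx
      rcases List.mem_append.1 hx with hx | hx
      · exact h1 x hx
      · rw [List.mem_singleton.1 hx]
        exact ha'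
    · simp
      omega
    · cases w with
      | nil =>
        simp at h2 ⊢
        omega
      | cons b t => simpa using h3

lemma finite_walks {A : Finset ℕ} {m i : ℕ} (hA : ∀ a ∈ A, 0 < a) (hm : ∀ a ∈ A, a ≤ m)
    (hi : i < m) (n : ℕ) : (walks A m i n).Finite := by
  induction n using Nat.strong_induction_on with
  | _ n ih =>
    rcases lt_or_ge n m with hn | hn
    · rw [walks_of_lt A hn]
      split_ifs <;> simp
    · rw [walks_of_ge hm hi hn]
      refine A.finite_toSet.biUnion fun a ha => (ih _ ?_).image _
      have := hA a (by simpa using ha)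
      omega

/-- The total weight of the walks to `n` satisfies the recurrence. -/
lemma finsum_walks_of_ge {A : Finset ℕ} {m i n : ℕ} (κ : ℕ → ℝ) (hA : ∀ a ∈ A, 0 < a)
    (hm : ∀ a ∈ A, a ≤ m) (hi : i < m) (hn : m ≤ n) :
    ∑ᶠ z ∈ walks A m i n, (z.map κ).prod =
      ∑ a ∈ A, κ a * ∑ᶠ z ∈ walks A m i (n - a), (z.map κ).prod := by
  rw [walks_of_ge hm hi hn, finsum_mem_biUnion, finsum_mem_coe_finset]
  · refine Finset.sum_congr rfl fun a _ => ?_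
    rw [finsum_mem_image (List.append_left_injective [a]).injOn,
      mul_finsum_mem]
    simp [mul_comm]
  · intro a _ b _ hab
    rw [Function.onFun, Set.disjoint_left]
    rintro _ ⟨w, _, rfl⟩ ⟨v, _, h⟩
    exact hab (by simpa using (List.append_inj' h rfl).2.symm)
  · exact A.finite_toSet
  · exact fun a _ => (finite_walks hA hm hi _).image _

theorem stmt3 (A : Finset ℕ) (hne : A.Nonempty) (hA : ∀ a ∈ A, 0 < a)
    (κ : ℕ → ℝ) (f : ℕ → ℝ)
    (hf : ∀ n, A.max' hne ≤ n → f n = ∑ a ∈ A, κ a * f (n - a))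
    (n : ℕ) (hn : A.max' hne ≤ n) :
    f n = ∑ i ∈ Finset.range (A.max' hne),
      (∑ᶠ z ∈ {z : List ℕ | (∀ x ∈ z, x ∈ A) ∧ z.sum = n - i ∧ A.max' hne - i ≤ z.headI},
        (z.map κ).prod) * f i := by
  have hm : ∀ a ∈ A, a ≤ A.max' hne := fun a ha => A.le_max' a ha
  generalize A.max' hne = m at *
  have key : ∀ k, f k = ∑ i ∈ Finset.range m,
      (∑ᶠ z ∈ walks A m i k, (z.map κ).prod) * f i := by
    intro k
    induction k using Nat.strong_induction_on with
    | _ k ih =>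
      rcases lt_or_ge k m with hk | hk
      · rw [Finset.sum_eq_single_of_mem k (Finset.mem_range.2 hk)]
        · simp [walks_of_lt A hk]
        · intro i _ hik
          simp [walks_of_lt A hk, hik.symm]
      · calc f k = ∑ a ∈ A, κ a * ∑ i ∈ Finset.range m,
              (∑ᶠ z ∈ walks A m i (k - a), (z.map κ).prod) * f i := by
              rw [hf k hk]
              refine Finset.sum_congr rfl fun a ha => ?_
              have := hA a ha
              have := hm a ha
              rw [← ih (k - a) (by omega)]
          _ = _ := by
              simp_rw [Finset.mul_sum]
              rw [Finset.sum_comm]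
              refine Finset.sum_congr rfl fun i hi => ?_
              rw [finsum_walks_of_ge κ hA hm (Finset.mem_range.1 hi) hk, Finset.sum_mul]
              simp_rw [mul_assoc]
  rw [key n]
  refine Finset.sum_congr rfl fun i hi => ?_
  have hi' := Finset.mem_range.1 hi
  -- As `i < m ≤ n`, the empty list lies in neither set and no subtraction truncates.
  have hset : walks A m i n =
      {z : List ℕ | (∀ x ∈ z, x ∈ A) ∧ z.sum = n - i ∧ m - i ≤ z.headI} := by
    ext z
    cases z with
    | nil =>
      simp [walks]
      omega
    | cons b t =>
      simp [walks]
      omega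
  rw [hset]
end

section
/- Let A = {a_1 < a_2 < ... < a_l} be a finite set of positive integers with l ≥ 2, let κ : A → ℝ, and let f : ℕ → ℝ satisfy f(n) = Σ_{a ∈ A} κ(a) f(n−a) for all n ≥ a_l. Define g : ℤ → ℝ by g(q) = Σ over all A-restricted compositions (z_1,...,z_k) of q of the product κ(z_1)⋯κ(z_k), with g(0) = 1 (the empty composition) and g(q) = 0 for q < 0. Then for every n ≥ a_l, f(n) = Σ_{α ∈ A, α ≠ a_1} Σ_{i = a_l − α}^{a_l − a_1 − 1} κ(α) g(n − i − α) f(i) + Σ_{i = a_l − a_1}^{a_l − 1} g(n − i) f(i). -/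
/-!
Splitting off the first part of a composition gives `g q = ∑ a ∈ A, κ a * g (q - a)` for `q ≠ 0`,
together with `g 0 = 1` and `g q = 0` for `q < 0`: thus `g` is the fundamental solution of the
recurrence satisfied by `f`. With `L = max A`, consider
`R q = ∑ α ∈ A, ∑ i ∈ [L - α, L - 1], κ α * g (q - i - α) * f i`.
It vanishes for `q < L`, and for `n ≥ L` the recurrence for `g` gives
`R n = ∑ a ∈ A, κ a * R (n - a)` plus the terms `κ α * f (n - α)` with `n - α < L`, which come from
`g 0 = 1`. This is the recurrence for `f`, so `f n = R n` for `n ≥ L` by strong induction.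
Finally, in the range `i ≥ L - min A` of `R n` every `α ∈ A` occurs, and the sum over `α` collapses
to `g (n - i)` by the recurrence for `g`.
-/

/-- The `A`-restricted compositions of the integer `q`. -/
def restrictedComps (A : Finset ℕ) (q : ℤ) : Set (List ℕ) :=
  {z : List ℕ | (∀ x ∈ z, x ∈ A) ∧ (z.sum : ℤ) = q}

lemma restrictedComps_neg (A : Finset ℕ) {q : ℤ} (hq : q < 0) : restrictedComps A q = ∅ := by
  ext z
  simp only [restrictedComps, Set.mem_ofPred_eq, Set.mem_empty_iff_false, iff_false, not_and]
  intro _ h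
  omega

lemma restrictedComps_zero (A : Finset ℕ) (hA : ∀ a ∈ A, 0 < a) :
    restrictedComps A 0 = {[]} := by
  ext z
  simp only [restrictedComps, Set.mem_ofPred_eq, Set.mem_singleton_iff]
  constructor
  · rintro ⟨h1, h2⟩
    cases z with
    | nil => rfl
    | cons a t =>
      have := hA a (h1 a (by simp))
      simp only [List.sum_cons] at h2
      omega
  · rintro rfl
    simp

/-- A composition of `q ≠ 0` is nonempty, hence determined by its first part and its tail. -/
lemma restrictedComps_eq_biUnion (A : Finset ℕ) {q : ℤ} (hq : q ≠ 0) :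
    restrictedComps A q = ⋃ a ∈ (A : Set ℕ), List.cons a '' restrictedComps A (q - a) := by
  ext z
  simp only [restrictedComps, Set.mem_ofPred_eq, Set.mem_iUnion, Set.mem_image, Finset.mem_coe,
    exists_prop]
  constructor
  · rintro ⟨h1, h2⟩
    cases z with
    | nil => exact absurd h2.symm (by simpa using hq)
    | cons a t =>
      simp only [List.sum_cons] at h2
      exact ⟨a, h1 a (by simp), t, ⟨fun x hx => h1 x (by simp [hx]), by omega⟩, rfl⟩
  · rintro ⟨a, ha, t, ⟨h1, h2⟩, rfl⟩
    refine ⟨fun x hx => ?_, ?_⟩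
    · rcases List.mem_cons.1 hx with rfl | hx
      · exact ha
      · exact h1 x hx
    · simp only [List.sum_cons]
      omega

lemma restrictedComps_finite (A : Finset ℕ) (hA : ∀ a ∈ A, 0 < a) (q : ℤ) :
    (restrictedComps A q).Finite := by
  have key : ∀ N : ℕ, ∀ q : ℤ, q < N → (restrictedComps A q).Finite := by
    intro N
    induction N with
    | zero =>
      intro q hq
      rw [restrictedComps_neg A (by simpa using hq)]
      exact Set.finite_empty
    | succ N ih =>
      intro q hq
      by_cases h0 : q = 0
      · rw [h0, restrictedComps_zero A hA]
        exact Set.finite_singleton _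
      · rw [restrictedComps_eq_biUnion A h0]
        refine A.finite_toSet.biUnion fun a ha => (ih _ ?_).image _
        have := hA a ha
        push_cast at hq
        omega
  exact key (q.toNat + 1) q (by push_cast; omega)

/-- The total weight of the `A`-restricted compositions of `q ≠ 0`, sorted by first part. -/
lemma finsum_restrictedComps (A : Finset ℕ) (hA : ∀ a ∈ A, 0 < a) (κ : ℕ → ℝ) {q : ℤ}
    (hq : q ≠ 0) :
    ∑ᶠ z ∈ restrictedComps A q, (z.map κ).prod
      = ∑ a ∈ A, κ a * ∑ᶠ z ∈ restrictedComps A (q - a), (z.map κ).prod := by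
  rw [restrictedComps_eq_biUnion A hq, finsum_mem_biUnion _ A.finite_toSet
    (fun a _ => (restrictedComps_finite A hA _).image _), finsum_mem_coe_finset]
  · refine Finset.sum_congr rfl fun a _ => ?_
    rw [finsum_mem_image (fun x _ y _ h => (List.cons.inj h).2),
      finsum_mem_eq_finite_toFinset_sum _ (restrictedComps_finite A hA _),
      finsum_mem_eq_finite_toFinset_sum _ (restrictedComps_finite A hA _), Finset.mul_sum]
    simp
  · intro a _ b _ hab
    rw [Function.onFun, Set.disjoint_left]
    rintro _ ⟨s, _, rfl⟩ ⟨t, _, h⟩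
    exact hab (List.cons.inj h).1.symm

/-- A solution `f` of the recurrence on `[L, ∞)`, expressed through its initial values and the
fundamental solution `g`. -/
lemma eq_sum_fundamental (A : Finset ℕ) (L : ℕ) (hA : ∀ a ∈ A, 0 < a) (hL : ∀ a ∈ A, a ≤ L)
    (κ f : ℕ → ℝ) (hf : ∀ n, L ≤ n → f n = ∑ a ∈ A, κ a * f (n - a))
    (g : ℤ → ℝ) (hneg : ∀ q < 0, g q = 0) (h0 : g 0 = 1)
    (hrec : ∀ q ≠ 0, g q = ∑ a ∈ A, κ a * g (q - a)) (n : ℕ) (hn : L ≤ n) :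
    f n = ∑ α ∈ A, ∑ i ∈ Finset.Icc (L - α) (L - 1), κ α * g ((n : ℤ) - i - α) * f i := by
  set R : ℤ → ℝ := fun q =>
    ∑ α ∈ A, ∑ i ∈ Finset.Icc (L - α) (L - 1), κ α * g (q - i - α) * f i with hR
  change f n = R n
  have hRneg : ∀ q : ℤ, q < L → R q = 0 := by
    intro q hq
    refine Finset.sum_eq_zero fun α hα => Finset.sum_eq_zero fun i hi => ?_
    rw [Finset.mem_Icc] at hi
    rw [hneg _ (by omega)]
    ring
  have hrec' : ∀ q, g q = (∑ a ∈ A, κ a * g (q - a)) + if q = 0 then 1 else 0 := by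
    intro q
    split_ifs with h
    · subst h
      rw [h0, Finset.sum_eq_zero, zero_add]
      intro a ha
      have := hA a ha
      rw [hneg _ (by omega), mul_zero]
    · rw [hrec q h, add_zero]
  have hRrec : ∀ n : ℕ, L ≤ n → R n = (∑ a ∈ A, κ a * R ((n : ℤ) - a))
      + ∑ α ∈ A, κ α * if n - α < L then f (n - α) else 0 := by
    intro n hn
    have h1 : ∑ a ∈ A, κ a * R ((n : ℤ) - a) = ∑ α ∈ A, ∑ i ∈ Finset.Icc (L - α) (L - 1),
        κ α * (∑ a ∈ A, κ a * g ((n : ℤ) - i - α - a)) * f i := by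
      simp only [hR, Finset.mul_sum, Finset.sum_mul]
      rw [Finset.sum_comm]
      refine Finset.sum_congr rfl fun α _ => ?_
      rw [Finset.sum_comm]
      refine Finset.sum_congr rfl fun i _ => Finset.sum_congr rfl fun a _ => ?_
      rw [show (n : ℤ) - a - i - α = n - i - α - a by ring]
      ring
    rw [h1, ← Finset.sum_add_distrib]
    refine Finset.sum_congr rfl fun α hα => ?_
    have hαL := hL α hα
    have hα0 := hA α hα
    -- The only index `i` with `n - i - α = 0` is `n - α`, which lies in the range iff `n - α < L`.
    have h2 : (κ α * if n - α < L then f (n - α) else 0) = ∑ i ∈ Finset.Icc (L - α) (L - 1),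
        κ α * (if (n : ℤ) - i - α = 0 then 1 else 0) * f i := by
      have h3 : ∀ i ∈ Finset.Icc (L - α) (L - 1),
          κ α * (if (n : ℤ) - i - α = 0 then 1 else 0) * f i
            = if n - α = i then κ α * f i else 0 := by
        intro i _
        by_cases h : n - α = i
        · rw [if_pos h, if_pos (by omega)]
          ring
        · rw [if_neg h, if_neg (by omega)]
          ring
      rw [Finset.sum_congr rfl h3, Finset.sum_ite_eq]
      by_cases h : n - α < L
      · rw [if_pos h, if_pos (Finset.mem_Icc.2 (by omega))]
      · rw [if_neg h, if_neg (by rw [Finset.mem_Icc]; omega), mul_zero]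
    rw [h2, ← Finset.sum_add_distrib]
    refine Finset.sum_congr rfl fun i _ => ?_
    rw [hrec' ((n : ℤ) - i - α)]
    ring
  induction n using Nat.strong_induction_on with
  | _ n ih =>
    rw [hRrec n hn, hf n hn, ← Finset.sum_add_distrib]
    refine Finset.sum_congr rfl fun a ha => ?_
    have haL := hL a ha
    have ha0 := hA a ha
    by_cases h : n - a < L
    · rw [if_pos h, hRneg _ (by omega)]
      ring
    · rw [if_neg h, ih (n - a) (by omega) (by omega), Nat.cast_sub (by omega)]
      ring

theorem stmt4 (A : Finset ℕ) (hne : A.Nonempty) (hcard : 2 ≤ A.card)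
    (hA : ∀ a ∈ A, 0 < a) (κ : ℕ → ℝ) (f : ℕ → ℝ)
    (hf : ∀ n, A.max' hne ≤ n → f n = ∑ a ∈ A, κ a * f (n - a))
    (g : ℤ → ℝ)
    (hg : ∀ q : ℤ,
      g q = ∑ᶠ z ∈ {z : List ℕ | (∀ x ∈ z, x ∈ A) ∧ (z.sum : ℤ) = q}, (z.map κ).prod)
    (n : ℕ) (hn : A.max' hne ≤ n) :
    f n = (∑ α ∈ A.erase (A.min' hne),
            ∑ i ∈ Finset.Icc (A.max' hne - α) (A.max' hne - A.min' hne - 1),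
              κ α * g ((n : ℤ) - i - α) * f i)
        + ∑ i ∈ Finset.Icc (A.max' hne - A.min' hne) (A.max' hne - 1),
            g ((n : ℤ) - i) * f i := by
  change ∀ q : ℤ, g q = ∑ᶠ z ∈ restrictedComps A q, (z.map κ).prod at hg
  have hneg : ∀ q < 0, g q = 0 := by
    intro q hq
    rw [hg, restrictedComps_neg A hq, finsum_mem_empty]
  have h0 : g 0 = 1 := by
    rw [hg, restrictedComps_zero A hA, finsum_mem_singleton]
    simp
  have hrec : ∀ q ≠ 0, g q = ∑ a ∈ A, κ a * g (q - a) := by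
    intro q hq
    rw [hg, finsum_restrictedComps A hA κ hq]
    exact Finset.sum_congr rfl fun a _ => by rw [← hg]
  have hlt : A.min' hne < A.max' hne := Finset.min'_lt_max'_of_card A hcard
  have hL : ∀ a ∈ A, a ≤ A.max' hne := fun a ha => A.le_max' a ha
  have hm : ∀ a ∈ A, A.min' hne ≤ a := fun a ha => A.min'_le a ha
  have hmA : A.min' hne ∈ A := A.min'_mem hne
  have hm0 := hA _ hmA
  rw [eq_sum_fundamental A (A.max' hne) hA hL κ f hf g hneg h0 hrec n hn]
  generalize A.max' hne = L at *
  generalize A.min' hne = m at *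
  have hsplit : ∀ α ∈ A, ∑ i ∈ Finset.Icc (L - α) (L - 1), κ α * g ((n : ℤ) - i - α) * f i
      = ∑ i ∈ Finset.Icc (L - α) (L - m - 1), κ α * g ((n : ℤ) - i - α) * f i
        + ∑ i ∈ Finset.Icc (L - m) (L - 1), κ α * g ((n : ℤ) - i - α) * f i := by
    intro α hα
    have h1 := hm α hα
    rw [← Finset.sum_union]
    · congr 1
      ext i
      simp only [Finset.mem_union, Finset.mem_Icc]
      omega
    · rw [Finset.disjoint_left]
      intro i
      simp only [Finset.mem_Icc]
      omega
  rw [Finset.sum_congr rfl hsplit, Finset.sum_add_distrib]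
  congr 1
  · -- For `α = min A` the low range of indices is empty.
    rw [← Finset.add_sum_erase A _ hmA, Finset.Icc_eq_empty (by omega), Finset.sum_empty, zero_add]
  · rw [Finset.sum_comm]
    refine Finset.sum_congr rfl fun i hi => ?_
    rw [Finset.mem_Icc] at hi
    rw [hrec ((n : ℤ) - i) (by omega), Finset.sum_mul]
end

section
/- Let a_1 < a_2 be positive integers, let k_1, k_2 ∈ ℝ, and let f : ℕ → ℝ satisfy the two-term recurrence f(n) = k_1 f(n−a_1) + k_2 f(n−a_2) for all n ≥ a_2. Define g : ℤ → ℝ by g(q) = Σ_{(x_1,x_2) ∈ ℕ², a_1 x_1 + a_2 x_2 = q} k_1^{x_1} k_2^{x_2} · binom(x_1 + x_2, x_1), with g(q) = 0 for q < 0. Then for every n ≥ a_2, f(n) = k_2 Σ_{i=0}^{a_2 − a_1 − 1} g(n − i − a_2) f(i) + Σ_{i = a_2 − a_1}^{a_2 − 1} g(n − i) f(i). -/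
/-!
Sorting the pairs `p` by the level `m = p.1 + p.2` writes `g q` as a finite sum of level sums
`levelSum m q`, the coefficients of `(k₁ X ^ a₁ + k₂ X ^ a₂) ^ m`. Pascal's rule relates consecutive
levels, and summing over `m` shows that `g` is the fundamental solution of the recurrence:
`g q = k₁ g (q - a₁) + k₂ g (q - a₂) + [q = 0]`, with `g q = 0` for `q < 0` (`fundamental_rec`).

Let `R n` be the right-hand side of the formula, considered for every `n : ℕ`. For `n ≥ a₂` the
equation for `g` gives `R n = k₁ R (n - a₁) + k₂ R (n - a₂) + k₂ [n - a₂ < a₂ - a₁] f (n - a₂)`.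
Strong induction then proves that `R n = f n` for `n ≥ a₂ - a₁` and `R n = 0` for `n < a₂ - a₁`
(`rhs_eq`): in the recurrence at `n`, the extra term is nonzero only where `R (n - a₂)` vanishes, and
there it supplies exactly the missing `k₂ f (n - a₂)`.
-/

/-- The coefficient of `X ^ q` in `(k₁ X ^ a₁ + k₂ X ^ a₂) ^ m`, expanded by the binomial theorem. -/
noncomputable def levelSum (a₁ a₂ : ℕ) (k₁ k₂ : ℝ) (m : ℕ) (q : ℤ) : ℝ :=
  ∑ p ∈ Finset.HasAntidiagonal.antidiagonal m, (m.choose p.1 : ℝ) *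
    (if (a₁ : ℤ) * p.1 + (a₂ : ℤ) * p.2 = q then k₁ ^ p.1 * k₂ ^ p.2 else 0)

lemma levelSum_zero (a₁ a₂ : ℕ) (k₁ k₂ : ℝ) (q : ℤ) :
    levelSum a₁ a₂ k₁ k₂ 0 q = if q = 0 then 1 else 0 := by
  simp [levelSum, eq_comm]

/-- Pascal's rule, summed over a level. -/
lemma levelSum_succ (a₁ a₂ : ℕ) (k₁ k₂ : ℝ) (m : ℕ) (q : ℤ) :
    levelSum a₁ a₂ k₁ k₂ (m + 1) q =
      k₁ * levelSum a₁ a₂ k₁ k₂ m (q - a₁) + k₂ * levelSum a₁ a₂ k₁ k₂ m (q - a₂) := by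
  unfold levelSum
  rw [Finset.sum_antidiagonal_choose_succ_mul (fun x y : ℕ =>
    if (a₁ : ℤ) * x + (a₂ : ℤ) * y = q then k₁ ^ x * k₂ ^ y else (0 : ℝ)), add_comm]
  congr 1
  · rw [Finset.mul_sum]
    refine Finset.sum_congr rfl fun p hp => ?_
    have hsymm : m.choose p.2 = m.choose p.1 :=
      (Nat.choose_symm_of_eq_add (Finset.HasAntidiagonal.mem_antidiagonal.1 hp).symm).symm
    have hiff : (a₁ : ℤ) * ((p.1 + 1 : ℕ) : ℤ) + a₂ * p.2 = q ↔
        (a₁ : ℤ) * p.1 + a₂ * p.2 = q - a₁ := by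
      push_cast; constructor <;> intro h <;> linarith
    simp only [hiff, hsymm]
    split_ifs <;> ring
  · rw [Finset.mul_sum]
    refine Finset.sum_congr rfl fun p hp => ?_
    have hiff : (a₁ : ℤ) * p.1 + a₂ * ((p.2 + 1 : ℕ) : ℤ) = q ↔
        (a₁ : ℤ) * p.1 + a₂ * p.2 = q - a₂ := by
      push_cast; constructor <;> intro h <;> linarith
    simp only [hiff]
    split_ifs <;> ring

/-- A solution of `a₁ x + a₂ y = q` has `x + y ≤ q`, so only the levels up to `q` contribute. -/
lemma finsum_eq_sum_levelSum (a₁ a₂ : ℕ) (ha₁ : 0 < a₁) (ha₂ : 0 < a₂) (k₁ k₂ : ℝ)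
    (q : ℤ) (N : ℕ) (hN : q < N) :
    (∑ᶠ p ∈ {p : ℕ × ℕ | (a₁ : ℤ) * p.1 + (a₂ : ℤ) * p.2 = q},
        k₁ ^ p.1 * k₂ ^ p.2 * ((p.1 + p.2).choose p.1 : ℝ)) =
      ∑ m ∈ Finset.range N, levelSum a₁ a₂ k₁ k₂ m q := by
  classical
  have hdisj : Set.PairwiseDisjoint (↑(Finset.range N) : Set ℕ)
      (fun m => Finset.HasAntidiagonal.antidiagonal m) := by
    intro m _ m' _ hne
    refine Finset.disjoint_left.2 fun p hp hp' => hne ?_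
    rw [← Finset.HasAntidiagonal.mem_antidiagonal.1 hp, ← Finset.HasAntidiagonal.mem_antidiagonal.1 hp']
  rw [finsum_mem_def, finsum_eq_sum_of_support_subset
    (s := (Finset.range N).biUnion fun m => Finset.HasAntidiagonal.antidiagonal m), Finset.sum_biUnion hdisj]
  · refine Finset.sum_congr rfl fun m _ => Finset.sum_congr rfl fun p hp => ?_
    rw [Finset.HasAntidiagonal.mem_antidiagonal] at hp
    simp only [Set.indicator_apply, Set.mem_ofPred_eq, hp]
    split_ifs <;> ring
  · intro p hp
    have hp' : (a₁ : ℤ) * p.1 + (a₂ : ℤ) * p.2 = q := by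
      by_contra hne
      exact hp (Set.indicator_of_notMem (by simpa using hne) _)
    have h1 : (p.1 : ℤ) ≤ a₁ * p.1 := by
      exact_mod_cast Nat.le_mul_of_pos_left p.1 ha₁
    have h2 : (p.2 : ℤ) ≤ a₂ * p.2 := by
      exact_mod_cast Nat.le_mul_of_pos_left p.2 ha₂
    simp only [Finset.coe_biUnion, Set.mem_iUnion, Finset.mem_coe, Finset.HasAntidiagonal.mem_antidiagonal,
      Finset.mem_range]
    exact ⟨p.1 + p.2, by omega, rfl⟩

section Fundamental

variable {a₁ a₂ : ℕ} {k₁ k₂ : ℝ} {g : ℤ → ℝ}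

lemma fundamental_neg (ha₁ : 0 < a₁) (ha₂ : 0 < a₂)
    (hg : ∀ q : ℤ, g q = ∑ᶠ p ∈ {p : ℕ × ℕ | (a₁ : ℤ) * p.1 + (a₂ : ℤ) * p.2 = q},
        k₁ ^ p.1 * k₂ ^ p.2 * ((p.1 + p.2).choose p.1 : ℝ))
    {q : ℤ} (hq : q < 0) : g q = 0 := by
  rw [hg, finsum_eq_sum_levelSum a₁ a₂ ha₁ ha₂ k₁ k₂ q 0 (by simpa using hq)]
  simp

lemma fundamental_rec (ha₁ : 0 < a₁) (ha₂ : 0 < a₂)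
    (hg : ∀ q : ℤ, g q = ∑ᶠ p ∈ {p : ℕ × ℕ | (a₁ : ℤ) * p.1 + (a₂ : ℤ) * p.2 = q},
        k₁ ^ p.1 * k₂ ^ p.2 * ((p.1 + p.2).choose p.1 : ℝ))
    (q : ℤ) : g q = k₁ * g (q - a₁) + k₂ * g (q - a₂) + if q = 0 then 1 else 0 := by
  have hsum : ∀ (r : ℤ) (N : ℕ), r < N →
      g r = ∑ m ∈ Finset.range N, levelSum a₁ a₂ k₁ k₂ m r := fun r N hN => by
    rw [hg, finsum_eq_sum_levelSum a₁ a₂ ha₁ ha₂ k₁ k₂ r N hN]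
  rw [hsum q (q.toNat + 1 + 1) (by omega), hsum (q - a₁) (q.toNat + 1) (by omega),
    hsum (q - a₂) (q.toNat + 1) (by omega), Finset.sum_range_succ', levelSum_zero]
  simp only [levelSum_succ, Finset.sum_add_distrib, Finset.mul_sum]

end Fundamental

/-- The right-hand side of the formula agrees with `f` from `a₂ - a₁` on and vanishes before; only
the recurrence of `g` and its vanishing at negative arguments matter. -/
lemma rhs_eq (a₁ a₂ : ℕ) (ha₁ : 0 < a₁) (h : a₁ < a₂) (k₁ k₂ : ℝ) (f : ℕ → ℝ)
    (hf : ∀ n, a₂ ≤ n → f n = k₁ * f (n - a₁) + k₂ * f (n - a₂))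
    (g : ℤ → ℝ) (hneg : ∀ q < 0, g q = 0)
    (hrec : ∀ q : ℤ, g q = k₁ * g (q - a₁) + k₂ * g (q - a₂) + if q = 0 then 1 else 0)
    (n : ℕ) :
    k₂ * (∑ i ∈ Finset.range (a₂ - a₁), g ((n : ℤ) - i - a₂) * f i)
        + ∑ i ∈ Finset.Icc (a₂ - a₁) (a₂ - 1), g ((n : ℤ) - i) * f i =
      if a₂ - a₁ ≤ n then f n else 0 := by
  induction n using Nat.strong_induction_on with
  | _ n ih =>
  by_cases hn : a₂ ≤ n
  · have i1 := ih (n - a₁) (by omega)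
    have i2 := ih (n - a₂) (by omega)
    rw [if_pos (by omega)] at i1
    rw [if_pos (by omega), hf n hn, ← i1]
    push_cast [Nat.cast_sub hn, Nat.cast_sub (h.le.trans hn)] at i2 ⊢
    have e1 : ∑ i ∈ Finset.range (a₂ - a₁), g ((n : ℤ) - i - a₂) * f i =
        k₁ * (∑ i ∈ Finset.range (a₂ - a₁), g ((n : ℤ) - a₁ - i - a₂) * f i)
        + k₂ * (∑ i ∈ Finset.range (a₂ - a₁), g ((n : ℤ) - a₂ - i - a₂) * f i)
        + if n - a₂ < a₂ - a₁ then f (n - a₂) else 0 := by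
      have hd : (if n - a₂ < a₂ - a₁ then f (n - a₂) else 0) =
          ∑ i ∈ Finset.range (a₂ - a₁), if n - a₂ = i then f i else 0 := by
        simp
      rw [hd, Finset.mul_sum, Finset.mul_sum, ← Finset.sum_add_distrib,
        ← Finset.sum_add_distrib]
      refine Finset.sum_congr rfl fun i _ => ?_
      have hiff : (n : ℤ) - i - a₂ = 0 ↔ n - a₂ = i := by omega
      rw [hrec ((n : ℤ) - i - a₂), show (n : ℤ) - i - a₂ - a₁ = n - a₁ - i - a₂ by ring,
        show (n : ℤ) - i - a₂ - a₂ = n - a₂ - i - a₂ by ring]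
      simp only [hiff]
      split_ifs <;> ring
    have e2 : ∑ i ∈ Finset.Icc (a₂ - a₁) (a₂ - 1), g ((n : ℤ) - i) * f i =
        k₁ * (∑ i ∈ Finset.Icc (a₂ - a₁) (a₂ - 1), g ((n : ℤ) - a₁ - i) * f i)
        + k₂ * (∑ i ∈ Finset.Icc (a₂ - a₁) (a₂ - 1), g ((n : ℤ) - a₂ - i) * f i) := by
      rw [Finset.mul_sum, Finset.mul_sum, ← Finset.sum_add_distrib]
      refine Finset.sum_congr rfl fun i hi => ?_
      rw [Finset.mem_Icc] at hi
      rw [hrec ((n : ℤ) - i), if_neg (by omega),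
        show (n : ℤ) - i - a₁ = n - a₁ - i by ring, show (n : ℤ) - i - a₂ = n - a₂ - i by ring]
      ring
    rw [e1, e2]
    by_cases hc : a₂ - a₁ ≤ n - a₂
    · rw [if_pos hc] at i2
      rw [if_neg (by omega), ← i2]
      ring
    · rw [if_neg hc] at i2
      rw [if_pos (by omega)]
      linear_combination k₂ * i2
  -- Below `a₂` all arguments of `g` are less than `a₁`, where `g` is the indicator of `0`.
  · have hsmall : ∀ q : ℤ, q < a₁ → g q = if q = 0 then 1 else 0 := fun q hq => by
      rw [hrec, hneg (q - a₁) (by omega), hneg (q - a₂) (by omega)]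
      ring
    have e1 : ∑ i ∈ Finset.range (a₂ - a₁), g ((n : ℤ) - i - a₂) * f i = 0 :=
      Finset.sum_eq_zero fun i _ => by rw [hneg _ (by omega), zero_mul]
    have e2 : ∑ i ∈ Finset.Icc (a₂ - a₁) (a₂ - 1), g ((n : ℤ) - i) * f i =
        ∑ i ∈ Finset.Icc (a₂ - a₁) (a₂ - 1), if n = i then f i else 0 := by
      refine Finset.sum_congr rfl fun i hi => ?_
      rw [Finset.mem_Icc] at hi
      have hiff : (n : ℤ) - i = 0 ↔ n = i := by omega
      rw [hsmall _ (by omega)]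
      simp only [hiff]
      split_ifs <;> ring
    have hmem : n ∈ Finset.Icc (a₂ - a₁) (a₂ - 1) ↔ a₂ - a₁ ≤ n := by
      rw [Finset.mem_Icc]; omega
    rw [e1, e2, Finset.sum_ite_eq, mul_zero, zero_add]
    simp only [hmem]

theorem stmt6 (a₁ a₂ : ℕ) (ha₁ : 0 < a₁) (h : a₁ < a₂) (k₁ k₂ : ℝ) (f : ℕ → ℝ)
    (hf : ∀ n, a₂ ≤ n → f n = k₁ * f (n - a₁) + k₂ * f (n - a₂))
    (g : ℤ → ℝ)
    (hg : ∀ q : ℤ, g q = ∑ᶠ p ∈ {p : ℕ × ℕ | (a₁ : ℤ) * p.1 + (a₂ : ℤ) * p.2 = q},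
        k₁ ^ p.1 * k₂ ^ p.2 * ((p.1 + p.2).choose p.1 : ℝ))
    (n : ℕ) (hn : a₂ ≤ n) :
    f n = k₂ * (∑ i ∈ Finset.range (a₂ - a₁), g ((n : ℤ) - i - a₂) * f i)
        + ∑ i ∈ Finset.Icc (a₂ - a₁) (a₂ - 1), g ((n : ℤ) - i) * f i := by
  have ha₂ : 0 < a₂ := ha₁.trans h
  rw [rhs_eq a₁ a₂ ha₁ h k₁ k₂ f hf g (fun q hq => fundamental_neg ha₁ ha₂ hg hq)
    (fundamental_rec ha₁ ha₂ hg) n, if_pos ((Nat.sub_le _ _).trans hn)]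
end

section
/- Let r and m be positive integers with r < m, and let n ≥ r. The number of compositions of n all of whose parts are positive integers congruent to r modulo m equals the number of compositions of n − r into parts from {r, m}. -/
/-- Add `m` to the first entry of a list (the empty list is left alone). -/
def addHead (m : ℕ) : List ℕ → List ℕ
  | [] => []
  | a :: t => (a + m) :: t

/-- The composition encoded by a word in `r` and `m`: the empty word gives `[r]`, a leading `m`
enlarges the first part by `m`, and any other leading letter prepends a part `r`. -/
def stackParts (r m : ℕ) : List ℕ → List ℕ
  | [] => [r]
  | x :: l => if x = m then addHead m (stackParts r m l) else r :: stackParts r m l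

theorem stackParts_eq_cons (r m : ℕ) (l : List ℕ) : ∃ a t, stackParts r m l = a :: t := by
  induction l with
  | nil => exact ⟨r, [], rfl⟩
  | cons x l ih =>
    obtain ⟨a, t, h⟩ := ih
    by_cases hx : x = m
    · exact ⟨a + m, t, by simp [stackParts, hx, h, addHead]⟩
    · exact ⟨r, a :: t, by simp [stackParts, hx, h]⟩

theorem stackParts_sum (r m : ℕ) (l : List ℕ) (hl : ∀ x ∈ l, x = r ∨ x = m) :
    (stackParts r m l).sum = l.sum + r := by
  induction l with
  | nil => simp [stackParts]
  | cons x l ih =>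
    have ih := ih fun y hy => hl y (List.mem_cons_of_mem _ hy)
    obtain ⟨a, t, h⟩ := stackParts_eq_cons r m l
    have hx := hl x List.mem_cons_self
    rw [h] at ih
    by_cases hxm : x = m
    · simp [stackParts, hxm, h, addHead] at ih ⊢
      omega
    · simp [stackParts, hxm, h] at ih ⊢
      omega

theorem stackParts_mem (r m : ℕ) (hr : 0 < r) (hrm : r < m) (l : List ℕ) :
    ∀ x ∈ stackParts r m l, 0 < x ∧ x % m = r := by
  induction l with
  | nil => simp [stackParts, hr, Nat.mod_eq_of_lt hrm]
  | cons x l ih =>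
    obtain ⟨a, t, h⟩ := stackParts_eq_cons r m l
    rw [h] at ih
    by_cases hxm : x = m
    · simp [stackParts, hxm, h, addHead] at ih ⊢
      exact ⟨⟨by omega, ih.1.2⟩, ih.2⟩
    · simp [stackParts, hxm, h] at ih ⊢
      exact ⟨⟨hr, Nat.mod_eq_of_lt hrm⟩, ih⟩

/-- The letters of the word can be recovered one at a time: the first part is `> r` exactly when
the word starts with `m`. -/
theorem stackParts_inj (r m : ℕ) (hrm : r < m) (l : List ℕ) :
    ∀ l' : List ℕ, (∀ x ∈ l, x = r ∨ x = m) → (∀ x ∈ l', x = r ∨ x = m) →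
      stackParts r m l = stackParts r m l' → l = l' := by
  induction l with
  | nil =>
    intro l' _ _ h
    cases l' with
    | nil => rfl
    | cons y l' =>
      obtain ⟨b, s, hb⟩ := stackParts_eq_cons r m l'
      by_cases hy : y = m
      · simp [stackParts, hy, hb, addHead] at h
        omega
      · simp [stackParts, hy, hb] at h
  | cons x l ih =>
    intro l' hl hl' h
    obtain ⟨a, t, ha⟩ := stackParts_eq_cons r m l
    have hx := hl x List.mem_cons_self
    cases l' with
    | nil =>
      by_cases hxm : x = m
      · simp [stackParts, hxm, ha, addHead] at h
        omega
      · simp [stackParts, hxm, ha] at h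
    | cons y l' =>
      obtain ⟨b, s, hb⟩ := stackParts_eq_cons r m l'
      have hy := hl' y List.mem_cons_self
      have key : x = y ∧ a = b ∧ t = s := by
        by_cases hxm : x = m <;> by_cases hym : y = m <;>
          simp [stackParts, hxm, hym, ha, hb, addHead] at h
        · exact ⟨hxm.trans hym.symm, h⟩
        · omega
        · omega
        · exact ⟨by omega, h⟩
      obtain ⟨rfl, rfl, rfl⟩ := key
      rw [ih l' (fun z hz => hl z (List.mem_cons_of_mem _ hz))
        (fun z hz => hl' z (List.mem_cons_of_mem _ hz)) (ha.trans hb.symm)]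

theorem stackParts_surj (r m : ℕ) (hrm : r < m) (t : List ℕ) :
    t ≠ [] → (∀ x ∈ t, x % m = r) →
      ∃ l : List ℕ, (∀ x ∈ l, x = r ∨ x = m) ∧ stackParts r m l = t := by
  induction t with
  | nil => exact fun h => absurd rfl h
  | cons a t ih =>
    intro _ ht
    have hbase : ∃ l : List ℕ, (∀ x ∈ l, x = r ∨ x = m) ∧ stackParts r m l = r :: t := by
      by_cases h0 : t = []
      · exact ⟨[], by simp, by simp [stackParts, h0]⟩
      · obtain ⟨l, hl, e⟩ := ih h0 fun x hx => ht x (List.mem_cons_of_mem _ hx)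
        exact ⟨r :: l, by simpa using hl, by simp [stackParts, hrm.ne, e]⟩
    have hstep : ∀ k : ℕ,
        ∃ l : List ℕ, (∀ x ∈ l, x = r ∨ x = m) ∧ stackParts r m l = (r + m * k) :: t := by
      intro k
      induction k with
      | zero => simpa using hbase
      | succ k ihk =>
        obtain ⟨l, hl, e⟩ := ihk
        exact ⟨m :: l, by simpa using hl, by simp [stackParts, e, addHead, mul_add, add_assoc]⟩
    have ha : r + m * (a / m) = a := by
      rw [← ht a List.mem_cons_self]
      exact Nat.mod_add_div a m
    rw [← ha]
    exact hstep (a / m)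

theorem stmt9 (r m : ℕ) (hr : 0 < r) (hm : 0 < m) (hrm : r < m)
    (n : ℕ) (hn : r ≤ n) :
    Nat.card {l : List ℕ // (∀ x ∈ l, 0 < x ∧ x % m = r) ∧ l.sum = n}
      = compCount {r, m} (n - r) := by
  unfold compCount
  symm
  refine Nat.card_congr (Equiv.ofBijective
    (fun l => ⟨stackParts r m l.1, stackParts_mem r m hr hrm l.1, ?_⟩) ⟨?_, ?_⟩)
  · rw [stackParts_sum r m l.1 l.2.1, l.2.2]
    omega
  · intro l l' h
    exact Subtype.ext
      (stackParts_inj r m hrm l.1 l'.1 l.2.1 l'.2.1 (congrArg Subtype.val h))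
  · rintro ⟨t, ht, hs⟩
    have h0 : t ≠ [] := by
      rintro rfl
      simp at hs
      omega
    obtain ⟨l, hl, e⟩ := stackParts_surj r m hrm t h0 fun x hx => (ht x hx).2
    refine ⟨⟨l, hl, ?_⟩, Subtype.ext e⟩
    have := stackParts_sum r m l hl
    rw [e, hs] at this
    omega
end

section
/- Let 2 ≤ m_1 ≤ m_2 and let R(n) denote the number of compositions of n in which no part lies in the interval [m_1 : m_2] = {m_1, m_1+1, ..., m_2}. Then for every n ≥ m_2 + 1, R(n) = 2 R(n−1) − R(n−m_1) + R(n−m_2−1) as integers. -/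
/-- With positive parts there are finitely many restricted compositions of `n`, since each of them
is a `Composition n`. -/
lemma finite_restricted (S : Set ℕ) (hS : ∀ x ∈ S, 0 < x) (n : ℕ) :
    Finite {l : List ℕ // (∀ x ∈ l, x ∈ S) ∧ l.sum = n} := by
  refine Finite.of_injective
    (fun l => (⟨l.1, fun hx => hS _ (l.2.1 _ hx), l.2.2⟩ : Composition n)) ?_
  intro a b h
  exact Subtype.ext (congrArg Composition.blocks h)

/-- Removing the first part `i + 1` of a restricted composition of `M + 1`. -/
def splitFirst (S : Set ℕ) (hS : ∀ x ∈ S, 0 < x) (M : ℕ) :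
    {l : List ℕ // (∀ x ∈ l, x ∈ S) ∧ l.sum = M + 1} ≃
      Σ i : Fin (M + 1),
        {l : List ℕ // (i : ℕ) + 1 ∈ S ∧ (∀ x ∈ l, x ∈ S) ∧ l.sum = M - i} where
  toFun
    | ⟨[], h⟩ => absurd h.2 (by simp)
    | ⟨a :: l, h⟩ =>
      have ha : 0 < a := hS a (h.1 a (by simp))
      have hs : a + l.sum = M + 1 := by simpa using h.2
      ⟨⟨a - 1, by omega⟩, l, by
        have h1 : a - 1 + 1 = a := by omega
        refine ⟨?_, fun x hx => h.1 x (by simp [hx]), ?_⟩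
        · simpa only [h1] using h.1 a (by simp)
        · simp only; omega⟩
  invFun p := ⟨((p.1 : ℕ) + 1) :: p.2.1, by
    obtain ⟨⟨i, hi⟩, l, h1, h2, h3⟩ := p
    refine ⟨?_, ?_⟩
    · intro x hx
      rcases List.mem_cons.1 hx with rfl | hx
      · exact h1
      · exact h2 x hx
    · simp only [List.sum_cons] at h3 ⊢
      omega⟩
  left_inv := by
    rintro ⟨_ | ⟨a, l⟩, h⟩
    · exact absurd h.2 (by simp)
    · have ha : 0 < a := hS a (h.1 a (by simp))
      apply Subtype.ext
      simp only [List.cons.injEq, and_true]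
      omega
  right_inv := by
    rintro ⟨⟨i, hi⟩, l, h⟩
    rfl

open Classical in
/-- Recursion on the first part `i + 1`. -/
lemma compCount_succ (S : Set ℕ) (hS : ∀ x ∈ S, 0 < x) (M : ℕ) :
    compCount S (M + 1) =
      ∑ i ∈ Finset.range (M + 1), if i + 1 ∈ S then compCount S (M - i) else 0 := by
  have hfin : ∀ i : Fin (M + 1),
      Finite {l : List ℕ // (i : ℕ) + 1 ∈ S ∧ (∀ x ∈ l, x ∈ S) ∧ l.sum = M - i} := fun i =>
    have := finite_restricted S hS (M - i)
    Finite.of_injective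
      (fun l => (⟨l.1, l.2.2⟩ : {l : List ℕ // (∀ x ∈ l, x ∈ S) ∧ l.sum = M - i}))
      fun a b h => Subtype.ext (Subtype.mk.inj h)
  rw [compCount, Nat.card_congr (splitFirst S hS M), Nat.card_sigma,
    ← Fin.sum_univ_eq_sum_range (fun i => if i + 1 ∈ S then compCount S (M - i) else 0)]
  refine Finset.sum_congr rfl fun i _ => ?_
  by_cases h : (i : ℕ) + 1 ∈ S <;> simp [h, compCount]

theorem stmt14 (m₁ m₂ : ℕ) (hm₁ : 2 ≤ m₁) (hm : m₁ ≤ m₂) (n : ℕ) (hn : m₂ + 1 ≤ n) :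
    (compCount {k : ℕ | 0 < k ∧ ¬(m₁ ≤ k ∧ k ≤ m₂)} n : ℤ)
      = 2 * compCount {k : ℕ | 0 < k ∧ ¬(m₁ ≤ k ∧ k ≤ m₂)} (n - 1)
        - compCount {k : ℕ | 0 < k ∧ ¬(m₁ ≤ k ∧ k ≤ m₂)} (n - m₁)
        + compCount {k : ℕ | 0 < k ∧ ¬(m₁ ≤ k ∧ k ≤ m₂)} (n - m₂ - 1) := by
  classical
  obtain ⟨M, rfl⟩ : ∃ M, n = M + 2 := ⟨n - 2, by omega⟩
  generalize hSdef : {k : ℕ | 0 < k ∧ ¬(m₁ ≤ k ∧ k ≤ m₂)} = S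
  have mem : ∀ k, k ∈ S ↔ 0 < k ∧ ¬(m₁ ≤ k ∧ k ≤ m₂) := fun k => by rw [← hSdef]; rfl
  have hS : ∀ x ∈ S, 0 < x := fun x hx => ((mem x).1 hx).1
  have e1 := compCount_succ S hS (M + 1)
  rw [Finset.sum_range_succ', if_pos ((mem _).2 (by omega))] at e1
  have e2 := compCount_succ S hS M
  -- the indicator of `S` drops by one at `m₁` and rises by one at `m₂ + 1`
  have key : ∀ i ∈ Finset.range (M + 1),
      ((if i + 1 + 1 ∈ S then compCount S (M + 1 - (i + 1)) else 0 : ℕ) : ℤ)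
        = ((if i + 1 ∈ S then compCount S (M - i) else 0 : ℕ) : ℤ)
          - (if i = m₁ - 2 then (compCount S (M - i) : ℤ) else 0)
          + (if i = m₂ - 1 then (compCount S (M - i) : ℤ) else 0) := by
    intro i _
    rw [Nat.add_sub_add_right]
    simp only [mem]
    split_ifs <;> omega
  have e3 := Finset.sum_congr rfl key
  rw [Finset.sum_add_distrib, Finset.sum_sub_distrib, Finset.sum_ite_eq', Finset.sum_ite_eq',
    if_pos (Finset.mem_range.2 (by omega)), if_pos (Finset.mem_range.2 (by omega)),
    ← Nat.cast_sum, ← Nat.cast_sum, ← e2] at e3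
  have a1 : M - (m₁ - 2) = M + 2 - m₁ := by omega
  have a2 : M - (m₂ - 1) = M + 2 - m₂ - 1 := by omega
  have a3 : M + 2 - 1 = M + 1 := by omega
  rw [a1, a2] at e3
  rw [a3, show M + 2 = M + 1 + 1 from rfl, e1, Nat.cast_add, e3]
  simp only [Nat.sub_zero]
  ring
end

section
/- Let m ≥ 2 and let F^m be the m-Fibonacci sequence defined by F^m(i) = 0 for 0 ≤ i ≤ m−2, F^m(m−1) = 1, and F^m(n) = Σ_{i=1}^{m} F^m(n−i) for n ≥ m. Define g : ℤ → ℤ by g(q) = Σ_{(x_1,x_2) ∈ ℕ², x_1 + (m+1) x_2 = q} 2^{x_1} (−1)^{x_2} binom(x_1 + x_2, x_1), with g(q) = 0 for q < 0. Then for every n ≥ m, F^m(n) = g(n−m) − g(n−2m). -/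
/-!
The generating function of `g` is `1 / (1 - 2z + z^(m+1))`: Pascal's rule, applied along the line
`x₁ + (m+1) x₂ = q`, gives `g (q+1) = 2 g q - g (q-m)` for `q ≥ 0` (`gNat_succ`), while `g 0 = 1`
and `g` vanishes at negative arguments. Subtracting consecutive instances of the `m`-Fibonacci
recurrence gives `F (n+1) = 2 F n - F (n-m)` for `n ≥ m` (`mFib_succ`), which is the same
recurrence. Comparing initial values, strong induction yields `F n = g (n-m+1) - g (n-m)` for all
`n`, and for `n ≥ m` one more use of the recurrence for `g` turns this into
`g (n-m) - g (n-2m)`.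
-/

/-- The signed weight `2^x (-1)^y binom(x+y, x)` of the lattice point `(x, y)`. -/
def latticeWeight (x y : ℕ) : ℤ := 2 ^ x * (-1) ^ y * ((x + y).choose x : ℤ)

/-- The weight of the point with second coordinate `j` on the line `x + (m+1) y = q`, or `0` if
that point has a negative first coordinate. -/
def lineTerm (m q j : ℕ) : ℤ :=
  if (m + 1) * j ≤ q then latticeWeight (q - (m + 1) * j) j else 0

/-- The function `g` of the theorem at a natural number `q`, as a finite sum over the second
coordinate. -/
def gNat (m q : ℕ) : ℤ := ∑ j ∈ Finset.range (q + 1), lineTerm m q j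

lemma latticeWeight_succ_succ (x y : ℕ) :
    latticeWeight (x + 1) (y + 1) = 2 * latticeWeight x (y + 1) - latticeWeight (x + 1) y := by
  unfold latticeWeight
  have h : (x + 1 + (y + 1)).choose (x + 1)
      = (x + (y + 1)).choose x + (x + 1 + y).choose (x + 1) := by
    rw [show x + 1 + (y + 1) = (x + (y + 1)) + 1 by ring, Nat.choose_succ_succ',
      show x + (y + 1) = x + 1 + y by ring]
  rw [h]
  push_cast
  ring

lemma latticeWeight_zero_succ (y : ℕ) : latticeWeight 0 (y + 1) = - latticeWeight 0 y := by
  simp [latticeWeight, pow_succ]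

lemma latticeWeight_succ_zero (x : ℕ) : latticeWeight (x + 1) 0 = 2 * latticeWeight x 0 := by
  simp [latticeWeight, pow_succ, mul_comm]

lemma lineTerm_succ_zero (m q : ℕ) : lineTerm m (q + 1) 0 = 2 * lineTerm m q 0 := by
  simp [lineTerm, latticeWeight_succ_zero]

/-- Pascal's rule along the line `x + (m+1) y = q + 1`. -/
lemma lineTerm_succ_succ (m q j : ℕ) : lineTerm m (q + 1) (j + 1)
    = 2 * lineTerm m q (j + 1) - (if m ≤ q then lineTerm m (q - m) j else 0) := by
  unfold lineTerm
  have e : (m + 1) * (j + 1) = (m + 1) * j + m + 1 := by ring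
  rw [e]
  generalize (m + 1) * j = t
  rcases lt_trichotomy q (t + m) with h | h | h
  · rw [if_neg (by omega), if_neg (by omega)]
    by_cases hm : m ≤ q
    · rw [if_pos hm, if_neg (by omega)]; simp
    · rw [if_neg hm]; simp
  · subst h
    rw [if_pos (by omega), if_neg (by omega), if_pos (by omega), if_pos (by omega)]
    simp [latticeWeight_zero_succ]
  · obtain ⟨d, rfl⟩ : ∃ d, q = t + m + 1 + d := ⟨q - (t + m + 1), by omega⟩
    rw [if_pos (by omega), if_pos (by omega), if_pos (by omega), if_pos (by omega),
      show t + m + 1 + d + 1 - (t + m + 1) = d + 1 by omega,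
      show t + m + 1 + d - (t + m + 1) = d by omega,
      show t + m + 1 + d - m - t = d + 1 by omega]
    exact latticeWeight_succ_succ d j

lemma gNat_eq_sum_range (m q N : ℕ) (h : q < N) :
    gNat m q = ∑ j ∈ Finset.range N, lineTerm m q j := by
  unfold gNat
  apply Finset.sum_subset
  · intro j; simp only [Finset.mem_range]; omega
  · intro j _ hj
    simp only [Finset.mem_range] at hj
    have : j ≤ (m + 1) * j := Nat.le_mul_of_pos_left _ (by omega)
    exact if_neg (by omega)

lemma gNat_succ (m q : ℕ) :
    gNat m (q + 1) = 2 * gNat m q - (if m ≤ q then gNat m (q - m) else 0) := by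
  have h3 : (if m ≤ q then gNat m (q - m) else 0)
      = ∑ j ∈ Finset.range (q + 1), (if m ≤ q then lineTerm m (q - m) j else 0) := by
    split_ifs
    · exact gNat_eq_sum_range _ _ _ (by omega)
    · simp
  rw [h3, gNat_eq_sum_range m (q + 1) (q + 1 + 1) (by omega),
    gNat_eq_sum_range m q (q + 1 + 1) (by omega), Finset.sum_range_succ',
    Finset.sum_range_succ' _ (q + 1), lineTerm_succ_zero]
  simp_rw [lineTerm_succ_succ]
  rw [Finset.sum_sub_distrib, ← Finset.mul_sum]
  ring

lemma finsum_line_eq_gNat (m q : ℕ) :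
    ∑ᶠ p ∈ {p : ℕ × ℕ | (p.1 : ℤ) + ((m : ℤ) + 1) * p.2 = (q : ℤ)}, latticeWeight p.1 p.2
      = gNat m q := by
  have hS : {p : ℕ × ℕ | (p.1 : ℤ) + ((m : ℤ) + 1) * p.2 = (q : ℤ)}
      = (((Finset.range (q + 1)).filter (fun j => (m + 1) * j ≤ q)).image
          (fun j => (q - (m + 1) * j, j)) : Finset (ℕ × ℕ)) := by
    ext ⟨x, y⟩
    simp only [Set.mem_ofPred_eq, Finset.coe_image, Finset.coe_filter, Finset.mem_range,
      Set.mem_image, Prod.mk.injEq]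
    have hy : y ≤ (m + 1) * y := Nat.le_mul_of_pos_left _ (by omega)
    constructor
    · intro h
      have h' : x + (m + 1) * y = q := by exact_mod_cast h
      exact ⟨y, ⟨by omega, by omega⟩, by omega, rfl⟩
    · rintro ⟨j, ⟨_, h2⟩, h3, rfl⟩
      have h' : x + (m + 1) * j = q := by omega
      exact_mod_cast h'
  rw [hS, finsum_mem_coe_finset, Finset.sum_image, Finset.sum_filter]
  · rfl
  · intro a _ b _ h
    exact (Prod.mk.inj h).2

lemma mFib_succ (m : ℕ) (F : ℕ → ℤ)
    (hrec : ∀ n, m ≤ n → F n = ∑ i ∈ Finset.Icc 1 m, F (n - i)) (n : ℕ) (hn : m ≤ n) :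
    F (n + 1) = 2 * F n - F (n - m) := by
  have hIcc : ∀ f : ℕ → ℤ, ∑ i ∈ Finset.Icc 1 m, f i = ∑ i ∈ Finset.range m, f (i + 1) := by
    intro f
    rw [Finset.range_eq_Ico, Finset.sum_Ico_add' f 0 m 1]
    rfl
  have a := hrec (n + 1) (by omega)
  have b := hrec n hn
  rw [hIcc] at a b
  -- Both windows are compared with the sum of `F (n - i)` over `0 ≤ i ≤ m`.
  have c := Finset.sum_range_succ (fun i => F (n - i)) m
  rw [Finset.sum_range_succ'] at c
  simp only [Nat.add_sub_add_right] at a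
  simp only [Nat.sub_zero] at c
  linarith

theorem stmt15 (m : ℕ) (hm : 2 ≤ m) (F : ℕ → ℤ)
    (h0 : ∀ i ≤ m - 2, F i = 0) (h1 : F (m - 1) = 1)
    (hrec : ∀ n, m ≤ n → F n = ∑ i ∈ Finset.Icc 1 m, F (n - i))
    (g : ℤ → ℤ)
    (hg : ∀ q : ℤ, g q = ∑ᶠ p ∈ {p : ℕ × ℕ | (p.1 : ℤ) + ((m : ℤ) + 1) * p.2 = q},
        2 ^ p.1 * (-1) ^ p.2 * ((p.1 + p.2).choose p.1 : ℤ))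
    (n : ℕ) (hn : m ≤ n) :
    F n = g ((n : ℤ) - m) - g ((n : ℤ) - 2 * m) := by
  have gnat : ∀ q : ℕ, g q = gNat m q := fun q => (hg q).trans (finsum_line_eq_gNat m q)
  have gneg : ∀ q : ℤ, q < 0 → g q = 0 := by
    intro q hq
    have hS : {p : ℕ × ℕ | (p.1 : ℤ) + ((m : ℤ) + 1) * p.2 = q} = ∅ := by
      ext p
      simp only [Set.mem_ofPred_eq, Set.mem_empty_iff_false, iff_false]
      have : (0 : ℤ) ≤ (p.1 : ℤ) + ((m : ℤ) + 1) * p.2 := by positivity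
      omega
    rw [hg, hS, finsum_mem_empty]
  have g0 : g 0 = 1 := by
    have := gnat 0
    simpa [gNat, lineTerm, latticeWeight] using this
  have gsucc : ∀ q : ℤ, 0 ≤ q → g (q + 1) = 2 * g q - g (q - m) := by
    intro q hq
    lift q to ℕ using hq
    have h := gNat_succ m q
    rw [← gnat, ← gnat] at h
    push_cast at h
    rw [h]
    split_ifs with hmq
    · rw [← gnat, Nat.cast_sub hmq]
    · rw [gneg ((q : ℤ) - m) (by omega)]
  have key : ∀ k : ℕ, F k = g ((k : ℤ) - m + 1) - g ((k : ℤ) - m) := by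
    intro k
    induction k using Nat.strong_induction_on with
    | _ k ih =>
      rcases lt_trichotomy k (m - 1) with h | h | h
      · rw [h0 k (by omega), gneg _ (by omega), gneg _ (by omega), sub_zero]
      · rw [show (k : ℤ) - m + 1 = 0 by omega, gneg ((k : ℤ) - m) (by omega), g0, h, h1, sub_zero]
      · rcases Nat.lt_or_ge m k with h' | h'
        · obtain ⟨l, rfl⟩ : ∃ l, k = l + 1 := ⟨k - 1, by omega⟩
          rw [mFib_succ m F hrec l (by omega), ih l (by omega), ih (l - m) (by omega),
            Nat.cast_sub (by omega)]
          have a := gsucc ((l : ℤ) - m) (by omega)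
          have b := gsucc ((l : ℤ) - m + 1) (by omega)
          rw [show (l : ℤ) - m + 1 - m = l - m - m + 1 by ring] at b
          push_cast
          rw [show (l : ℤ) + 1 - m = l - m + 1 by ring]
          linarith
        · obtain rfl : k = m := by omega
          have hF : F k = 1 := by
            rw [hrec k le_rfl, Finset.sum_eq_single 1, h1]
            · intro i hi hi1
              rw [Finset.mem_Icc] at hi
              exact h0 _ (by omega)
            · intro hi
              exact absurd (Finset.mem_Icc.2 ⟨le_rfl, by omega⟩) hi
          have a := gsucc 0 le_rfl
          rw [gneg (0 - (k : ℤ)) (by omega)] at a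
          rw [hF, sub_self, a, g0]
          norm_num
  rw [key n, gsucc _ (by omega), show (n : ℤ) - m - m = n - 2 * m by ring]
  ring
end

section
/- Let the Padovan sequence be defined by P_0 = 0, P_1 = 1, P_2 = 0, and P_n = P_{n−2} + P_{n−3} for n ≥ 3. Then for every n ≥ 1, P_n = Σ_{t = ⌈(n−1)/3⌉}^{⌊(n−1)/2⌋} binom(t, n−1−2t). -/
/-!
Put `m = n - 1`. Extended by zero to all `t`, the summand `g t m` is the coefficient of `x ^ m` in
`(x ^ 2 + x ^ 3) ^ t`, so Pascal's rule gives `g (t + 1) (m + 3) = g t (m + 1) + g t m`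
(`padovanTerm_succ`). Summing over `t` shows that the sums satisfy the Padovan recurrence with the
same initial values (`padovan_eq_sum_range`). The stated range of `t` is exactly the one outside of
which the summand vanishes.
-/

/-- The coefficient of `x ^ m` in `(x ^ 2 + x ^ 3) ^ t`; the condition `2 * t ≤ m` prevents the
truncated subtraction from contributing `t.choose 0 = 1` when `m < 2 * t`. -/
def padovanTerm (t m : ℕ) : ℕ := if 2 * t ≤ m then t.choose (m - 2 * t) else 0

theorem padovanTerm_succ (t m : ℕ) :
    padovanTerm (t + 1) (m + 3) = padovanTerm t (m + 1) + padovanTerm t m := by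
  unfold padovanTerm
  rcases lt_trichotomy (2 * t) (m + 1) with h | h | h
  · rw [if_pos (by omega), if_pos (by omega), if_pos (by omega)]
    rw [show m + 3 - 2 * (t + 1) = (m - 2 * t) + 1 by omega,
      show m + 1 - 2 * t = (m - 2 * t) + 1 by omega, Nat.choose_succ_succ']
    ring
  · rw [if_pos (by omega), if_pos (by omega), if_neg (by omega)]
    rw [show m + 3 - 2 * (t + 1) = 0 by omega, show m + 1 - 2 * t = 0 by omega]
    simp
  · rw [if_neg (by omega), if_neg (by omega), if_neg (by omega)]

/-- The cutoff `N` is left free because the recurrence step lowers it by one, while the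
terms with `t > m / 2` vanish anyway. -/
theorem padovan_eq_sum_range (P : ℕ → ℕ) (h0 : P 0 = 0) (h1 : P 1 = 1) (h2 : P 2 = 0)
    (hrec : ∀ n, 3 ≤ n → P n = P (n - 2) + P (n - 3)) (m : ℕ) :
    ∀ N, m < N → P (m + 1) = ∑ t ∈ Finset.range N, padovanTerm t m := by
  induction m using Nat.strong_induction_on with
  | _ m ih =>
    intro N hN
    obtain ⟨k, rfl⟩ : ∃ k, N = k + 1 := ⟨N - 1, by omega⟩
    rw [Finset.sum_range_succ']
    match m, ih, hN with
    | 0, _, _ => simp [padovanTerm, h1]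
    | 1, _, _ =>
      have h (t : ℕ) : ¬ 2 * (t + 1) ≤ 1 := by omega
      simp [padovanTerm, h2, h]
    | 2, _, hN =>
      obtain ⟨j, rfl⟩ : ∃ j, k = j + 1 := ⟨k - 1, by omega⟩
      have h (t : ℕ) : ¬ 2 * (t + 1 + 1) ≤ 2 := by omega
      have h3 := hrec 3 le_rfl
      rw [Finset.sum_range_succ']
      simp [padovanTerm, h3, h0, h1, h]
    | m + 3, ih, hN =>
      have h3 := hrec (m + 3 + 1) (by omega)
      rw [show m + 3 + 1 - 2 = m + 1 + 1 by omega, show m + 3 + 1 - 3 = m + 1 by omega] at h3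
      rw [h3, ih (m + 1) (by omega) k (by omega), ih m (by omega) k (by omega),
        ← Finset.sum_add_distrib]
      simp only [padovanTerm_succ]
      simp [padovanTerm]

theorem stmt18 (P : ℕ → ℕ) (h0 : P 0 = 0) (h1 : P 1 = 1) (h2 : P 2 = 0)
    (hrec : ∀ n, 3 ≤ n → P n = P (n - 2) + P (n - 3)) (n : ℕ) (hn : 1 ≤ n) :
    P n = ∑ t ∈ Finset.Icc ((n - 1 + 2) / 3) ((n - 1) / 2), t.choose (n - 1 - 2 * t) := by
  obtain ⟨m, rfl⟩ : ∃ m, n = m + 1 := ⟨n - 1, by omega⟩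
  rw [padovan_eq_sum_range P h0 h1 h2 hrec m (m + 1) (by omega), Nat.add_sub_cancel]
  symm
  have hsub : Finset.Icc ((m + 2) / 3) (m / 2) ⊆ Finset.range (m + 1) := by
    intro t ht
    rw [Finset.mem_Icc] at ht
    rw [Finset.mem_range]
    omega
  rw [← Finset.sum_subset hsub]
  · refine Finset.sum_congr rfl fun t ht => ?_
    rw [Finset.mem_Icc] at ht
    rw [padovanTerm, if_pos (by omega)]
  · intro t _ ht
    rw [Finset.mem_Icc] at ht
    unfold padovanTerm
    split_ifs with h
    -- Here `t` is below the lower limit, so `t < m - 2 * t`.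
    · exact Nat.choose_eq_zero_of_lt (by omega)
    · rfl
end
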